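/- Let g be a unipotent element of GL_n(F_q) with g \ne 1, acting on the set A of 1-antiflags of F_q^n (pairs (U, W) with dim U = 1, dim W = n-1, U \cap W = 0), where g fixes an antiflag iff both U and W are g-invariant. Then fpr(g, A) < 1/q^{2m}, where m = dim Im(g-1) \ge 1; in particular the proportion of antiflags fixed by g is at most 1/q^2. -/

import Mathlib

/-!
Antiflags are counted through pairs `(v, φ) ∈ V × V*` with `φ v = 1`: such a pair gives the
antiflag `(span v, ker φ)`, and the pairs over a given antiflag form one free orbit of `Fˣ` acting
by `c • (v, φ) = (c v, c⁻¹ φ)`. Write `N = g - 1`, `q = |F|`, `n = dim V`, `m = rank N`,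
`k = n - m`. If the antiflag of `(v, φ)` is fixed by `g`, then `v` is an eigenvector of `g`, so
`N v = 0` because `N` is nilpotent, and then `φ ∘ g = φ`, so `φ` annihilates `range N`. Thus `v`
and `φ` both lie in `k`-dimensional spaces. For fixed `v` the equation `φ v = 1` cuts out of a
space of functionals either nothing or an affine hyperplane. Hence there are exactly
`(q ^ n - 1) q ^ (n - 1)` pairs in total and at most `(q ^ k - 1) q ^ (k - 1)` fixed ones
(`card_pairs_top`, `card_pairs_le`). The strict bound follows from
`q ^ m (q ^ k - 1) = q ^ n - q ^ m < q ^ n - 1`.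
-/

namespace Antiflag

open Module

variable {F : Type*} [Field F] {V : Type*} [AddCommGroup V] [Module F V]

/-- `(U, W)` is a `1`-antiflag: a line and a hyperplane meeting trivially. The subtraction
`finrank F V - 1` never truncates, because `finrank F p.1 = 1`. -/
def IsAntiflag (p : Submodule F V × Submodule F V) : Prop :=
  finrank F p.1 = 1 ∧ finrank F p.2 = finrank F V - 1 ∧ p.1 ⊓ p.2 = ⊥

/-- Pairs `(v, φ)` with `v ∈ K`, `φ ∈ L` and `φ v = 1`. -/
abbrev Pairs (K : Submodule F V) (L : Submodule F (Dual F V)) : Type _ :=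
  {x : V × Dual F V // x.1 ∈ K ∧ x.2 ∈ L ∧ x.2 x.1 = 1}

/-- The level set `ℓ = 1` of a nonzero functional is an affine hyperplane. -/
lemma card_level_mul [Fintype F] {M : Type*} [AddCommGroup M] [Module F M] [FiniteDimensional F M]
    (ℓ : M →ₗ[F] F) (x₀ : M) (h : ℓ x₀ = 1) :
    Nat.card {x : M // ℓ x = 1} * Fintype.card F = Fintype.card F ^ finrank F M := by
  let e : {x : M // ℓ x = 1} × F ≃ M :=
    { toFun := fun p => p.1.1 + p.2 • x₀
      invFun := fun y => (⟨y + (1 - ℓ y) • x₀, by simp [h]⟩, ℓ y - 1)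
      left_inv := by
        rintro ⟨⟨x, hx⟩, c⟩
        ext
        · simp [h, hx, add_assoc]
        · simp [h, hx]
      right_inv := by
        intro y
        simp [add_assoc, ← add_smul] }
  have := Nat.card_congr e
  rw [Nat.card_prod, Module.natCard_eq_pow_finrank (K := F) (V := M),
    Nat.card_eq_fintype_card (α := F)] at this
  exact this

/-- Pairs are fibred over their (necessarily nonzero) vector. -/
def pairsEquiv (K : Submodule F V) (L : Submodule F (Dual F V)) :
    Pairs K L ≃ Σ v : {v : K // v ≠ 0}, {φ : L // φ.1 v.1.1 = 1} where
  toFun x := ⟨⟨⟨x.1.1, x.2.1⟩, fun h => by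
    have h0 : x.1.1 = 0 := congrArg Subtype.val h
    have := x.2.2.2
    simp [h0] at this⟩, ⟨⟨x.1.2, x.2.2.1⟩, x.2.2.2⟩⟩
  invFun y := ⟨(y.1.1.1, y.2.1.1), y.1.1.2, y.2.1.2, y.2.2⟩
  left_inv _ := rfl
  right_inv _ := rfl

variable [Fintype F] [FiniteDimensional F V]

lemma card_ne_zero (K : Submodule F V) :
    Nat.card {v : K // v ≠ 0} = Fintype.card F ^ finrank F K - 1 := by
  classical
  have : Finite K := Module.finite_of_finite F
  have := Fintype.ofFinite K
  rw [Nat.card_eq_fintype_card, Fintype.card_subtype_compl, ← Nat.card_eq_fintype_card (α := K),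
    Module.natCard_eq_pow_finrank (K := F), Nat.card_eq_fintype_card (α := F)]
  simp

lemma card_pairs_le (K : Submodule F V) (L : Submodule F (Dual F V)) :
    Nat.card (Pairs K L) * Fintype.card F ≤
      (Fintype.card F ^ finrank F K - 1) * Fintype.card F ^ finrank F L := by
  classical
  have : Finite V := Module.finite_of_finite F
  have : Finite (Dual F V) := Module.finite_of_finite F
  have := Fintype.ofFinite {v : K // v ≠ 0}
  rw [Nat.card_congr (pairsEquiv K L), Nat.card_sigma, Finset.sum_mul, ← card_ne_zero K,
    Nat.card_eq_fintype_card (α := {v : K // v ≠ 0}), ← smul_eq_mul (Fintype.card _),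
    ← Finset.card_univ (α := {v : K // v ≠ 0})]
  refine Finset.sum_le_card_nsmul _ _ _ fun v _ => ?_
  rcases isEmpty_or_nonempty {φ : L // φ.1 v.1.1 = 1} with h | ⟨⟨φ, hφ⟩⟩
  · simp
  · exact (card_level_mul ((Dual.eval F V v.1.1).comp L.subtype) φ hφ).le

lemma card_pairs_top :
    Nat.card (Pairs (⊤ : Submodule F V) ⊤) * Fintype.card F =
      (Fintype.card F ^ finrank F V - 1) * Fintype.card F ^ finrank F V := by
  classical
  have : Finite V := Module.finite_of_finite F
  have : Finite (Dual F V) := Module.finite_of_finite F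
  have := Fintype.ofFinite {v : (⊤ : Submodule F V) // v ≠ 0}
  rw [Nat.card_congr (pairsEquiv ⊤ ⊤), Nat.card_sigma, Finset.sum_mul,
    Finset.sum_congr rfl (g := fun _ => Fintype.card F ^ finrank F V), Finset.sum_const,
    Finset.card_univ, ← Nat.card_eq_fintype_card, card_ne_zero, finrank_top, smul_eq_mul]
  intro v _
  have hv : v.1.1 ≠ 0 := fun h => v.2 (Subtype.ext h)
  obtain ⟨φ, hφ⟩ := Module.Projective.exists_dual_eq_one F hv
  have := card_level_mul ((Dual.eval F V v.1.1).comp (⊤ : Submodule F (Dual F V)).subtype)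
    (⟨φ, Submodule.mem_top⟩ : (⊤ : Submodule F (Dual F V))) hφ
  rwa [finrank_top, Subspace.dual_finrank_eq] at this

omit [Fintype F] in
lemma isAntiflag_of_pair {v : V} {φ : Dual F V} (h : φ v = 1) :
    IsAntiflag (F ∙ v, LinearMap.ker φ) := by
  have hv : v ≠ 0 := by rintro rfl; simp at h
  have hφ : φ ≠ 0 := by rintro rfl; simp at h
  refine ⟨finrank_span_singleton hv, ?_, ?_⟩
  · have := Module.Dual.finrank_ker_add_one_of_ne_zero hφ
    simp only
    omega
  · rw [Submodule.eq_bot_iff]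
    rintro x ⟨hx, hx'⟩
    obtain ⟨c, rfl⟩ := Submodule.mem_span_singleton.1 hx
    have : c = 0 := by simpa [h] using hx'
    simp [this]

omit [Fintype F] in
lemma exists_pair {p : Submodule F V × Submodule F V} (hp : IsAntiflag p) :
    ∃ x : V × Dual F V, x.2 x.1 = 1 ∧ p = (F ∙ x.1, LinearMap.ker x.2) := by
  obtain ⟨U, W⟩ := p
  obtain ⟨h1, h2, h3⟩ := hp
  simp only at h1 h2 h3
  obtain ⟨⟨v, hvU⟩, hv0, hv⟩ := finrank_eq_one_iff'.1 h1
  have hv0' : v ≠ 0 := fun h => hv0 (Subtype.ext h)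
  have hU : U = F ∙ v := by
    apply le_antisymm
    · intro x hx
      obtain ⟨c, hc⟩ := hv ⟨x, hx⟩
      exact Submodule.mem_span_singleton.2 ⟨c, congrArg Subtype.val hc⟩
    · simpa using hvU
  have hvW : v ∉ W := fun h => hv0' (by
    have : v ∈ U ⊓ W := ⟨hvU, h⟩
    simpa [h3] using this)
  obtain ⟨f, hf, hWf⟩ := Submodule.exists_le_ker_of_notMem hvW
  refine ⟨(v, (f v)⁻¹ • f), by simp [hf], ?_⟩
  have hf0 : f ≠ 0 := by rintro rfl; simp at hf
  have hker : LinearMap.ker ((f v)⁻¹ • f) = LinearMap.ker f :=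
    LinearMap.ker_smul _ _ (inv_ne_zero hf)
  have hW : W = LinearMap.ker f := by
    apply Submodule.eq_of_le_of_finrank_eq hWf
    have := Module.Dual.finrank_ker_add_one_of_ne_zero hf0
    omega
  simp only [hker, ← hW, ← hU]

/-- The pair over `p` obtained from a chosen pair by scaling with `c`; as `c` varies it runs over
all pairs with antiflag `p`. -/
noncomputable def scaledPair (p : {p : Submodule F V × Submodule F V // IsAntiflag p}) (c : Fˣ) :
    V × Dual F V :=
  (c.1 • (exists_pair p.2).choose.1, c.1⁻¹ • (exists_pair p.2).choose.2)

omit [Fintype F] in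
lemma scaledPair_apply (p : {p : Submodule F V × Submodule F V // IsAntiflag p}) (c : Fˣ) :
    (scaledPair p c).2 (scaledPair p c).1 = 1 := by
  simp [scaledPair, (exists_pair p.2).choose_spec.1]

omit [Fintype F] in
lemma eq_scaledPair (p : {p : Submodule F V × Submodule F V // IsAntiflag p}) (c : Fˣ) :
    p.1 = (F ∙ (scaledPair p c).1, LinearMap.ker (scaledPair p c).2) := by
  refine (exists_pair p.2).choose_spec.2.trans ?_
  simp only [scaledPair]
  rw [LinearMap.ker_smul _ _ (inv_ne_zero c.ne_zero),
    Submodule.span_singleton_smul_eq c.ne_zero.isUnit]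

omit [Fintype F] in
lemma scaledPair_injective : Function.Injective fun x :
    {p : Submodule F V × Submodule F V // IsAntiflag p} × Fˣ => scaledPair x.1 x.2 := by
  rintro ⟨p, c⟩ ⟨p', c'⟩ h
  simp only at h
  obtain rfl : p = p' := Subtype.ext (by rw [eq_scaledPair p c, eq_scaledPair p' c', h])
  have h1 := congrArg (fun x => (exists_pair p.2).choose.2 x.1) h
  simp only [scaledPair, map_smul, (exists_pair p.2).choose_spec.1, smul_eq_mul, mul_one] at h1
  rw [Units.ext h1]

omit [Fintype F] in
lemma scaledPair_surjective {v : V} {φ : Dual F V} (h : φ v = 1) :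
    ∃ p c, scaledPair p c = (v, φ) := by
  obtain ⟨p, hp⟩ : ∃ p : {p : Submodule F V × Submodule F V // IsAntiflag p},
      p.1 = (F ∙ v, LinearMap.ker φ) := ⟨⟨_, isAntiflag_of_pair h⟩, rfl⟩
  obtain ⟨hs, hk⟩ := Prod.mk.inj (hp.symm.trans (eq_scaledPair p 1))
  have h1 := scaledPair_apply p 1
  have hsmul : ∀ c, scaledPair p c = (c.1 • (scaledPair p 1).1, c.1⁻¹ • (scaledPair p 1).2) := by
    intro c
    simp [scaledPair]
  generalize scaledPair p 1 = x at hs hk h1 hsmul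
  obtain ⟨w, ψ⟩ := x
  simp only at hs hk h1 hsmul
  obtain ⟨c, hc⟩ := Submodule.mem_span_singleton.1 (hs ▸ Submodule.mem_span_singleton_self v)
  have hc0 : c ≠ 0 := by
    rintro rfl
    simp [← hc] at h
  refine ⟨p, Units.mk0 c hc0, (hsmul _).trans (Prod.ext hc ?_)⟩
  ext x
  -- `x - φ x • v` lies in the common kernel, so it suffices to compare the functionals at `v`.
  have hx : x - φ x • v ∈ LinearMap.ker ψ := by rw [← hk]; simp [h]
  rw [LinearMap.mem_ker, map_sub, map_smul, ← hc, map_smul, h1, sub_eq_zero] at hx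
  simp [hx]
  field_simp

lemma card_pairs_top_le :
    Nat.card (Pairs (⊤ : Submodule F V) ⊤) ≤
      Nat.card {p : Submodule F V × Submodule F V // IsAntiflag p} * (Fintype.card F - 1) := by
  classical
  have : Finite V := Module.finite_of_finite F
  rw [← Fintype.card_units, ← Nat.card_eq_fintype_card, ← Nat.card_prod]
  refine Nat.card_le_card_of_surjective
    (fun x => ⟨scaledPair x.1 x.2, trivial, trivial, scaledPair_apply _ _⟩) ?_
  rintro ⟨⟨v, φ⟩, -, -, h⟩
  obtain ⟨p, c, hpc⟩ := scaledPair_surjective h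
  exact ⟨(p, c), Subtype.ext hpc⟩

omit [Fintype F] [FiniteDimensional F V] in
/-- A pair whose antiflag is fixed by a unipotent `g` consists of fixed points of `g` in `V` and
`V*`. -/
lemma mem_of_fixed {g : V →ₗ[F] V} (hu : IsNilpotent (g - LinearMap.id)) {v : V} {φ : Dual F V}
    (h : φ v = 1) (h1 : (F ∙ v).map g = F ∙ v)
    (h2 : (LinearMap.ker φ).map g = LinearMap.ker φ) :
    v ∈ LinearMap.ker (g - LinearMap.id) ∧
      φ ∈ (LinearMap.range (g - LinearMap.id)).dualAnnihilator := by
  have hv0 : v ≠ 0 := by rintro rfl; simp at h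
  have hgv : g v ∈ F ∙ v := h1 ▸ Submodule.mem_map_of_mem (Submodule.mem_span_singleton_self v)
  obtain ⟨c, hc⟩ := Submodule.mem_span_singleton.1 hgv
  have hN : (g - LinearMap.id : V →ₗ[F] V) v = (c - 1) • v := by simp [← hc, sub_smul]
  have hpow : ∀ j : ℕ, ((g - LinearMap.id : Module.End F V) ^ j) v = (c - 1) ^ j • v := by
    intro j
    induction j with
    | zero => simp
    | succ j ih =>
      rw [pow_succ', Module.End.mul_apply, ih, map_smul, hN, smul_smul, pow_succ]
  obtain ⟨k, hk⟩ := hu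
  have hz := hpow k
  have hk' : ((g - LinearMap.id : Module.End F V) ^ k) v = 0 := by
    rw [show (g - LinearMap.id : Module.End F V) ^ k = 0 from hk]; rfl
  rw [hk', eq_comm, smul_eq_zero, or_iff_left hv0] at hz
  have hker : (g - LinearMap.id : V →ₗ[F] V) v = 0 := by
    rw [hN, eq_zero_of_pow_eq_zero hz, zero_smul]
  refine ⟨hker, ?_⟩
  rw [Submodule.mem_dualAnnihilator]
  rintro _ ⟨x, rfl⟩
  have hgv' : g v = v := by simpa [sub_eq_zero] using hker
  have hx : x - φ x • v ∈ LinearMap.ker φ := by simp [h]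
  have hgx : g (x - φ x • v) ∈ LinearMap.ker φ := h2 ▸ Submodule.mem_map_of_mem hx
  simpa [hgv', h] using hgx

lemma card_fixed_le {g : V →ₗ[F] V} (hu : IsNilpotent (g - LinearMap.id)) :
    Nat.card {p : Submodule F V × Submodule F V //
      IsAntiflag p ∧ p.1.map g = p.1 ∧ p.2.map g = p.2} * (Fintype.card F - 1) ≤
    Nat.card (Pairs (LinearMap.ker (g - LinearMap.id))
      (LinearMap.range (g - LinearMap.id)).dualAnnihilator) := by
  classical
  have : Finite V := Module.finite_of_finite F
  have : Finite (Dual F V) := Module.finite_of_finite F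
  rw [← Fintype.card_units, ← Nat.card_eq_fintype_card, ← Nat.card_prod]
  refine Nat.card_le_card_of_injective
    (fun x => ⟨scaledPair ⟨x.1.1, x.1.2.1⟩ x.2, ?_⟩) ?_
  · obtain ⟨⟨p, hp, h1, h2⟩, c⟩ := x
    have he := eq_scaledPair ⟨p, hp⟩ c
    have h := scaledPair_apply ⟨p, hp⟩ c
    simp only at he
    rw [he] at h1 h2
    obtain ⟨ha, hb⟩ := mem_of_fixed hu h h1 h2
    exact ⟨ha, hb, h⟩
  · rintro ⟨⟨p, hp, _⟩, c⟩ ⟨⟨p', hp', _⟩, c'⟩ h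
    have := scaledPair_injective (a₁ := (⟨p, hp⟩, c)) (a₂ := (⟨p', hp'⟩, c'))
      (congrArg Subtype.val h)
    simp only [Prod.mk.injEq, Subtype.mk.injEq] at this
    obtain ⟨rfl, rfl⟩ := this
    rfl

/-- From the pair counts to the ratio: `a` and `b` stand for the numbers of all and of fixed
antiflags. The pair counts, `q - 1` times these, are further multiplied by `q` to avoid the
truncated exponents `k + m - 1` and `k - 1`. -/
lemma div_lt_of_counts {q a b k m : ℕ} (hq : 2 ≤ q) (hm : 1 ≤ m)
    (ha : (q ^ (k + m) - 1) * q ^ (k + m) ≤ a * (q - 1) * q)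
    (hb : b * (q - 1) * q ≤ (q ^ k - 1) * q ^ k) :
    (b : ℝ) / a < 1 / (q : ℝ) ^ (2 * m) := by
  have hk1 : 1 ≤ q ^ k := Nat.one_le_pow _ _ (by omega)
  have hkm1 : 1 ≤ q ^ (k + m) := Nat.one_le_pow _ _ (by omega)
  have hqR : (2 : ℝ) ≤ q := by exact_mod_cast hq
  have ha' : ((q : ℝ) ^ (k + m) - 1) * q ^ (k + m) ≤ a * (q - 1) * q := by
    have := (Nat.cast_le (α := ℝ)).2 ha
    push_cast [Nat.cast_sub hkm1, Nat.cast_sub (show 1 ≤ q by omega)] at this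
    exact this
  have hb' : (b : ℝ) * (q - 1) * q ≤ ((q : ℝ) ^ k - 1) * q ^ k := by
    have := (Nat.cast_le (α := ℝ)).2 hb
    push_cast [Nat.cast_sub hk1, Nat.cast_sub (show 1 ≤ q by omega)] at this
    exact this
  have hm1 : (1 : ℝ) < (q : ℝ) ^ m := one_lt_pow₀ (by linarith) (by omega)
  have hkR : (1 : ℝ) ≤ (q : ℝ) ^ k := one_le_pow₀ (by linarith)
  have hc : (0 : ℝ) < ((q : ℝ) - 1) * q := by nlinarith
  have key : (b : ℝ) * q ^ (2 * m) < a := by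
    refine lt_of_mul_lt_mul_right ?_ hc.le
    calc (b : ℝ) * q ^ (2 * m) * ((q - 1) * q) = (b * (q - 1) * q) * q ^ (2 * m) := by ring
      _ ≤ (((q : ℝ) ^ k - 1) * q ^ k) * q ^ (2 * m) := by gcongr
      _ = ((q : ℝ) ^ (k + m) - q ^ m) * q ^ (k + m) := by ring
      _ < ((q : ℝ) ^ (k + m) - 1) * q ^ (k + m) := by gcongr
      _ ≤ a * ((q - 1) * q) := by linarith
  have hpos : (0 : ℝ) < (q : ℝ) ^ (2 * m) := by positivity
  have ha0 : (0 : ℝ) < a := lt_of_le_of_lt (by positivity) key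
  rw [div_lt_div_iff₀ ha0 hpos]
  linarith

end Antiflag


/-- Let `g ≠ 1` be a unipotent invertible linear endomorphism of `V ≅ F_qⁿ`, acting on
the set of `1`-antiflags (pairs `(U, W)` with `dim U = 1`, `dim W = n-1`, `U ∩ W = 0`),
where `g` fixes an antiflag iff both subspaces are `g`-invariant. With
`m = dim Im(g-1) ≥ 1`, the proportion of antiflags fixed by `g` is `< 1/q^{2m}`, hence
at most `1/q²`. -/
theorem stmt14 (F : Type*) [Field F] [Fintype F]
    (V : Type*) [AddCommGroup V] [Module F V] [FiniteDimensional F V]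
    (g : V →ₗ[F] V) (hbij : Function.Bijective g)
    (hunip : IsNilpotent (g - LinearMap.id)) (hne : g ≠ LinearMap.id) :
    1 ≤ Module.finrank F (LinearMap.range (g - LinearMap.id)) ∧
    (Nat.card {p : Submodule F V × Submodule F V //
        (Module.finrank F p.1 = 1 ∧ Module.finrank F p.2 = Module.finrank F V - 1 ∧
          p.1 ⊓ p.2 = ⊥) ∧ p.1.map g = p.1 ∧ p.2.map g = p.2} : ℝ) /
      (Nat.card {p : Submodule F V × Submodule F V //
        Module.finrank F p.1 = 1 ∧ Module.finrank F p.2 = Module.finrank F V - 1 ∧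
          p.1 ⊓ p.2 = ⊥} : ℝ) <
      1 / (Fintype.card F : ℝ) ^
        (2 * Module.finrank F (LinearMap.range (g - LinearMap.id))) ∧
    (Nat.card {p : Submodule F V × Submodule F V //
        (Module.finrank F p.1 = 1 ∧ Module.finrank F p.2 = Module.finrank F V - 1 ∧
          p.1 ⊓ p.2 = ⊥) ∧ p.1.map g = p.1 ∧ p.2.map g = p.2} : ℝ) /
      (Nat.card {p : Submodule F V × Submodule F V //
        Module.finrank F p.1 = 1 ∧ Module.finrank F p.2 = Module.finrank F V - 1 ∧
          p.1 ⊓ p.2 = ⊥} : ℝ) ≤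
      1 / (Fintype.card F : ℝ) ^ 2 := by
  have hm : 1 ≤ Module.finrank F (LinearMap.range (g - LinearMap.id)) := by
    rw [Nat.one_le_iff_ne_zero, Ne, Submodule.finrank_eq_zero, LinearMap.range_eq_bot, sub_eq_zero]
    exact hne
  have hq : 2 ≤ Fintype.card F := Fintype.one_lt_card
  have hrk := LinearMap.finrank_range_add_finrank_ker (g - LinearMap.id)
  have hann := Subspace.finrank_add_finrank_dualAnnihilator_eq
    (LinearMap.range (g - LinearMap.id))
  have ha := Nat.mul_le_mul_right (Fintype.card F) (Antiflag.card_pairs_top_le (F := F) (V := V))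
  rw [Antiflag.card_pairs_top, ← hrk, add_comm] at ha
  have hb := (Nat.mul_le_mul_right (Fintype.card F) (Antiflag.card_fixed_le hunip)).trans
    (Antiflag.card_pairs_le _ _)
  rw [show Module.finrank F (LinearMap.range (g - LinearMap.id)).dualAnnihilator =
    Module.finrank F (LinearMap.ker (g - LinearMap.id)) by omega] at hb
  have hlt := Antiflag.div_lt_of_counts hq hm ha hb
  refine ⟨hm, hlt, hlt.le.trans ?_⟩
  have hqR : (1 : ℝ) ≤ Fintype.card F := by exact_mod_cast (by omega : 1 ≤ Fintype.card F)
  exact one_div_le_one_div_of_le (by positivity) (pow_le_pow_right₀ hqR (by omega))
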